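/- If G is a line perfect graph (i.e. the line graph of G is a perfect graph), then χ'_trans(G) ≤ 4. -/

import Mathlib

/-!
Only one property of line perfect graphs is used: every subgraph of maximum degree at most three
has a proper 3-edge-coloring. Indeed four pairwise intersecting edges share a vertex, so cliques
in the line graph of such a subgraph have at most three elements
(`threeColorable_of_isPerfect`). For a graph with this property, any two proper edge colorings
`f`, `g` with colors from the same set `C` are 4-equivalent, whatever `C` is
(`reflTransGen_step`). If `|C| ≤ 4`, there is nothing to prove. Otherwise fix `t ∈ C`, transform
`f` so that its class of color `t` becomes `B = M(g, t)`, delete `B`, and use induction on `|C|`.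

To reach `B`, the class `A = M(f, t)` is changed edge by edge, and in between it need not be a
color class. A `State` is a proper coloring, a matching `A` inside three color classes `K`, and a
set `D` of at most two defects, vertices not covered by `A`, such that off `D` the graph `K - A` has
degree at most two. If `D` is empty, let `N` be `K` with a further color: `N - A` has maximum
degree at most three, so the classes in `N` can be recolored with `A` as one class
(`State.finish`). The matching is improved as follows (`State.improve`).

* If `D = ∅`, add an edge of `B \ A` when `A ⊂ B`; otherwise remove an edge of `A \ B`, whose ends
  become the defects.
* If `y ∈ D` is not covered by `B`, its degree is less than `|C|`, so some color is missing at `y`;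
  put that color in `N`, and `y` is no longer a defect.
* If `y ∈ D` lies on an edge `yz` of `B`, put the color of `yz` in `N` and add `yz` to `A`. The edge
  `zw` of `A` at `z`, if there is one, is removed, and `w` becomes a defect instead of `y`.

Each move lowers `3 |A △ B| + |D|`. After it, the new matching `A` lies in four classes `N`, and off
the defects `N - A` has degree at most three. To get back to three classes one needs a
matching `M` in `N - A` covering all vertices of degree at least three there: then `N - M` has
maximum degree at most three, so `M` can be made a color class and the other three classes
contain `A` (`exists_state`). Such an `M` exists because `N - A` has at most two vertices of degree
four (`exists_matching`): delete one edge at each of them and 3-color the rest. At most two of the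
three colors can be missing at a vertex that `M` has to cover, so the third one will do.
-/

open SimpleGraph Set

namespace EdgeTrans

universe u v

variable {V : Type*} {W : Type*}

/-- The degree of a vertex. -/
noncomputable def deg (G : SimpleGraph V) (x : V) : ℕ :=
  (G.neighborSet x).ncard

/-- The maximum degree `Δ(G)`. -/
noncomputable def maxDeg (G : SimpleGraph V) : ℕ :=
  ⨆ x, deg G x

/-- A proper `t`-edge-coloring of `G`, using the colors `1, …, t`. -/
def IsProperEdgeColoring (G : SimpleGraph V) (t : ℕ) (f : Sym2 V → ℕ) : Prop :=
  (∀ e ∈ G.edgeSet, f e ∈ Finset.Icc 1 t) ∧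
  ∀ e₁ ∈ G.edgeSet, ∀ e₂ ∈ G.edgeSet, e₁ ≠ e₂ → (∃ x, x ∈ e₁ ∧ x ∈ e₂) → f e₁ ≠ f e₂

/-- The color class `M(f, j)`: the set of edges of `G` colored `j` by `f`. -/
def colorClass (G : SimpleGraph V) (f : Sym2 V → ℕ) (j : ℕ) : Set (Sym2 V) :=
  {e | e ∈ G.edgeSet ∧ f e = j}

/-- `f` and `g` differ by at most `n` color classes. -/
def DifferAtMost (G : SimpleGraph V) (n : ℕ) (f g : Sym2 V → ℕ) : Prop :=
  {j : ℕ | colorClass G f j ≠ colorClass G g j}.ncard ≤ n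

/-- `f` and `g` are `n`-equivalent proper `t`-edge-colorings: one can be transformed into the
other by a sequence of proper `t`-edge-colorings in which consecutive colorings differ by at
most `n` color classes. -/
def NEquiv (G : SimpleGraph V) (t n : ℕ) (f g : Sym2 V → ℕ) : Prop :=
  ∃ (k : ℕ) (F : ℕ → Sym2 V → ℕ), 1 ≤ k ∧ F 0 = f ∧ F k = g ∧
    (∀ i ≤ k, IsProperEdgeColoring G t (F i)) ∧
    ∀ i < k, DifferAtMost G n (F i) (F (i + 1))

/-- The chromatic index `χ'(G)`. -/
noncomputable def chromIdx (G : SimpleGraph V) : ℕ :=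
  sInf {t | ∃ f, IsProperEdgeColoring G t f}

/-- The edge chromatic transformation index `χ'_trans(G)`: the minimum `n ≥ 2` such that any
two proper `χ'(G)`-edge-colorings of `G` are `n`-equivalent. -/
noncomputable def transIdx (G : SimpleGraph V) : ℕ :=
  sInf {n | 2 ≤ n ∧ ∀ f g, IsProperEdgeColoring G (chromIdx G) f →
      IsProperEdgeColoring G (chromIdx G) g → NEquiv G (chromIdx G) n f g}

/-- `v` is a cutvertex of `G`: some two other vertices are connected in `G`, but every walk
between them passes through `v`. -/
def IsCutVertex (G : SimpleGraph V) (x : V) : Prop :=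
  ∃ a b : V, a ≠ x ∧ b ≠ x ∧ G.Reachable a b ∧ ∀ p : G.Walk a b, x ∈ p.support

/-- A block of `G`: a maximal connected subgraph without a cutvertex of the subgraph. -/
def IsBlock (G : SimpleGraph V) (B : G.Subgraph) : Prop :=
  B.coe.Connected ∧ (∀ x, ¬ IsCutVertex B.coe x) ∧
    ∀ B' : G.Subgraph, B ≤ B' → B'.coe.Connected →
      (∀ x, ¬ IsCutVertex B'.coe x) → B' = B

/-- Membership in the class `𝒜(q)`: every subgraph `H` of `G` with `Δ(H) ≤ q` has a proper
`q`-edge-coloring. -/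
def MemA (q : ℕ) (G : SimpleGraph V) : Prop :=
  ∀ H : SimpleGraph V, H ≤ G → maxDeg H ≤ q → ∃ f, IsProperEdgeColoring H q f

/-- `G` is `k`-degenerate: every (nonempty) subgraph of `G` contains a vertex of degree
at most `k` in the subgraph. -/
def Degenerate (k : ℕ) (G : SimpleGraph V) : Prop :=
  ∀ H : G.Subgraph, H.verts.Nonempty → ∃ x ∈ H.verts, (H.neighborSet x).ncard ≤ k

/-- `G` has `H` as a minor (via branch sets). -/
def HasMinor (G : SimpleGraph V) (H : SimpleGraph W) : Prop :=
  ∃ F : W → Set V,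
    (∀ w, (G.induce (F w)).Connected) ∧
    (∀ w₁ w₂, w₁ ≠ w₂ → Disjoint (F w₁) (F w₂)) ∧
    (∀ w₁ w₂, H.Adj w₁ w₂ → ∃ v₁ ∈ F w₁, ∃ v₂ ∈ F w₂, G.Adj v₁ v₂)

/-- Planarity, via Wagner's characterization: no `K₅` minor and no `K₃,₃` minor. -/
def Planar (G : SimpleGraph V) : Prop :=
  ¬ HasMinor G (completeGraph (Fin 5)) ∧
  ¬ HasMinor G (completeBipartiteGraph (Fin 3) (Fin 3))

/-- Series-parallel: no `K₄` minor. -/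
def SeriesParallel (G : SimpleGraph V) : Prop :=
  ¬ HasMinor G (completeGraph (Fin 4))

/-- `G` is chordless: in every cycle, any two nonconsecutive vertices are non-adjacent,
i.e. every edge of `G` joining two vertices of a cycle is an edge of the cycle. -/
def Chordless (G : SimpleGraph V) : Prop :=
  ∀ (x : V) (c : G.Walk x x), c.IsCycle →
    ∀ a ∈ c.support, ∀ b ∈ c.support, G.Adj a b → s(a, b) ∈ c.edges

/-- The wheel graph with hub `none` and cycle `ZMod n`. -/
def wheelGraph (n : ℕ) : SimpleGraph (Option (ZMod n)) :=
  SimpleGraph.fromRel (fun a b =>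
    a = none ∨ ∃ i : ZMod n, a = some i ∧ b = some (i + 1))

/-- `G` is a wheel graph. -/
def IsWheel (G : SimpleGraph V) : Prop :=
  ∃ n : ℕ, 3 ≤ n ∧ Nonempty (G ≃g wheelGraph n)

/-- `G` is a Halin graph: `G` is planar and is the edge-disjoint union of a spanning tree `T`
on at least four vertices having no vertex of degree two, and a cycle through exactly the
leaves of `T`. -/
def IsHalin (G : SimpleGraph V) : Prop :=
  Planar G ∧ 4 ≤ Nat.card V ∧
  ∃ T : SimpleGraph V, T ≤ G ∧ T.IsTree ∧ (∀ x : V, deg T x ≠ 2) ∧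
    ∃ (x₀ : V) (c : G.Walk x₀ x₀), c.IsCycle ∧
      (∀ e : Sym2 V, e ∈ c.edges ↔ e ∈ G.edgeSet \ T.edgeSet) ∧
      (∀ u : V, u ∈ c.support ↔ deg T u = 1)

/-- The subgraph `G(f,g,t)`: the (spanning) subgraph of `G` with edge set
`M(f,t) △ M(g,t)`. -/
def diffGraph (G : SimpleGraph V) (t : ℕ) (f g : Sym2 V → ℕ) : SimpleGraph V :=
  SimpleGraph.fromEdgeSet (symmDiff (colorClass G f t) (colorClass G g t))

/-- The walk `p` (a path or a cycle) is an entire connected component of its ambient graph: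
every edge incident with a vertex of `p` is an edge of `p`. -/
def IsComponentWalk {G : SimpleGraph V} {u x : V} (p : G.Walk u x) : Prop :=
  ∀ a ∈ p.support, ∀ b, G.Adj a b → s(a, b) ∈ p.edges

/-- The color `i` is missing at `x` under `f`. -/
def MissingAt (G : SimpleGraph V) (f : Sym2 V → ℕ) (i : ℕ) (x : V) : Prop :=
  ∀ e ∈ G.edgeSet, x ∈ e → f e ≠ i

/-- The path `p` is alternately colored with colors `a` and `b` under `f`
(an `(a,b)`-colored path). -/
def AltColored (f : Sym2 V → ℕ) (a b : ℕ) {G : SimpleGraph V} {u x : V}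
    (p : G.Walk u x) : Prop :=
  (∀ i : Fin p.edges.length, f (p.edges.get i) = if Even i.1 then a else b) ∨
  (∀ i : Fin p.edges.length, f (p.edges.get i) = if Even i.1 then b else a)

/-- The path `p` is `t`-alternating: of any two consecutive edges, one is colored `t`. -/
def AltPath (f : Sym2 V → ℕ) (t : ℕ) {G : SimpleGraph V} {u x : V}
    (p : G.Walk u x) : Prop :=
  ∀ (i : ℕ) (h : i + 1 < p.edges.length),
    f (p.edges.get ⟨i, Nat.lt_of_succ_lt h⟩) = t ∨ f (p.edges.get ⟨i + 1, h⟩) = t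

/-- The cycle `c` is `t`-alternating: of any two (cyclically) consecutive edges, one is
colored `t`. -/
def IsAltCycle (f : Sym2 V → ℕ) (t : ℕ) {G : SimpleGraph V} {u : V}
    (c : G.Walk u u) : Prop :=
  ∀ i : Fin c.edges.length,
    f (c.edges.get i) = t ∨
    f (c.edges.get ⟨(i.1 + 1) % c.edges.length, Nat.mod_lt _ i.pos⟩) = t

/-- `G` is 2-connected. -/
def TwoConnected (G : SimpleGraph V) : Prop :=
  G.Connected ∧ 3 ≤ Nat.card V ∧ ∀ x, ¬ IsCutVertex G x

/-- The union of the cycle `c` and the ears `P j` for `j < i`, as a subgraph. -/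
noncomputable def earPrefix {G : SimpleGraph V} {v₀ : V} (c : G.Walk v₀ v₀) {n : ℕ}
    {x y : Fin n → V} (P : ∀ i : Fin n, G.Walk (x i) (y i)) (i : ℕ) : G.Subgraph :=
  c.toSubgraph ⊔ ⨆ j : Fin n, ⨆ _ : (j : ℕ) < i, (P j).toSubgraph

/-- `c, P 0, …, P (n-1)` is a `t`-alternating ear decomposition with respect to the cycle `c`:
`c` is a `t`-alternating cycle, and each `P i` is a `(cᵢ, t)`-colored path (`cᵢ ≤ t - 1`) which
is an ear of `c ∪ P 0 ∪ … ∪ P i`, i.e. its endpoints lie in the previous part and its internal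
vertices have degree 2 in `c ∪ P 0 ∪ … ∪ P i`. -/
def IsEarDecomp (G : SimpleGraph V) (f : Sym2 V → ℕ) (t : ℕ) {v₀ : V} (c : G.Walk v₀ v₀)
    (n : ℕ) (x y : Fin n → V) (P : ∀ i : Fin n, G.Walk (x i) (y i)) : Prop :=
  c.IsCycle ∧ IsAltCycle f t c ∧
  ∀ i : Fin n,
    (P i).IsPath ∧ 1 ≤ (P i).length ∧
    (∃ ci : ℕ, ci ≤ t - 1 ∧ AltColored f ci t (P i)) ∧
    x i ∈ (earPrefix c P (i : ℕ)).verts ∧ y i ∈ (earPrefix c P (i : ℕ)).verts ∧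
    ∀ a ∈ (P i).support, a ≠ x i → a ≠ y i →
      ((earPrefix c P ((i : ℕ) + 1)).neighborSet a).ncard = 2

/-- The line graph of `G`. -/
def lineGr (G : SimpleGraph V) : SimpleGraph G.edgeSet :=
  SimpleGraph.fromRel (fun e₁ e₂ => ∃ x, x ∈ (e₁ : Sym2 V) ∧ x ∈ (e₂ : Sym2 V))

/-- The clique number (in `ℕ∞`). -/
noncomputable def cliqueNumE (G : SimpleGraph V) : ℕ∞ :=
  sSup {n : ℕ∞ | ∃ (m : ℕ) (s : Finset V), n = (m : ℕ∞) ∧ G.IsNClique m s}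

/-- `G` is a perfect graph: every induced subgraph has chromatic number equal to its
clique number. -/
def IsPerfect (G : SimpleGraph V) : Prop :=
  ∀ s : Set V, (G.induce s).chromaticNumber = cliqueNumE (G.induce s)

/-- A partition of the vertex set of `G` into `n` cliques, each of size `sz`. -/
def IsCliquePartition (G : SimpleGraph V) (n sz : ℕ) (P : Set (Set V)) : Prop :=
  P.ncard = n ∧ (∀ s ∈ P, G.IsClique s ∧ s.ncard = sz) ∧
  ⋃₀ P = Set.univ ∧ P.Pairwise fun s₁ s₂ => Disjoint s₁ s₂

/-- A proper vertex `n`-coloring of `G`, viewed as a partition of the vertex set into `n`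
independent sets (color classes). -/
def IsIndepPartition (G : SimpleGraph V) (n : ℕ) (P : Set (Set V)) : Prop :=
  P.ncard = n ∧ (∀ s ∈ P, ∀ a ∈ s, ∀ b ∈ s, ¬ G.Adj a b) ∧
  ⋃₀ P = Set.univ ∧ P.Pairwise fun s₁ s₂ => Disjoint s₁ s₂

/-- The graph `H(p,n)`: vertex classes `V_1, …, V_{2n}` of size `p` (indexed here by
`ZMod (2n)`), with two vertices adjacent iff they lie in the same class or in (cyclically)
consecutive classes. -/
def Hgraph (p n : ℕ) : SimpleGraph (ZMod (2 * n) × Fin p) :=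
  SimpleGraph.fromRel (fun a b => a.1 = b.1 ∨ a.1 + 1 = b.1)

/-- The clique partition `{C_1, …, C_n}` of `H(p,n)`, `C_i = V_{2i-1} ∪ V_{2i}`. -/
def Cpart (p n : ℕ) : Set (Set (ZMod (2 * n) × Fin p)) :=
  {s | ∃ i : Fin n, s = {x | x.1 = ((2 * (i : ℕ) : ℕ) : ZMod (2 * n)) ∨
      x.1 = ((2 * (i : ℕ) + 1 : ℕ) : ZMod (2 * n))}}

/-- The clique partition `{R_1, …, R_n}` of `H(p,n)`, `R_1 = V_{2n} ∪ V_1` and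
`R_i = V_{2i-2} ∪ V_{2i-1}`. -/
def Rpart (p n : ℕ) : Set (Set (ZMod (2 * n) × Fin p)) :=
  {s | ∃ i : Fin n, s = {x | x.1 = ((2 * (i : ℕ) : ℕ) : ZMod (2 * n)) - 1 ∨
      x.1 = ((2 * (i : ℕ) : ℕ) : ZMod (2 * n))}}

/-- A multigraph on vertices `α` with edges `β`: each edge has two distinct endpoints. -/
structure Multigraph (α : Type u) (β : Type v) where
  ends : β → Sym2 α
  not_isDiag : ∀ e, ¬ (ends e).IsDiag

namespace Multigraph

variable {α : Type u} {β : Type v}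

/-- A proper `t`-edge-coloring of a multigraph, with colors `1, …, t`. -/
def IsProper (G : Multigraph α β) (t : ℕ) (f : β → ℕ) : Prop :=
  (∀ e, f e ∈ Finset.Icc 1 t) ∧
  ∀ e₁ e₂ : β, e₁ ≠ e₂ → (∃ x, x ∈ G.ends e₁ ∧ x ∈ G.ends e₂) → f e₁ ≠ f e₂

/-- The color class `M(f,j)` of a multigraph edge coloring. -/
def mColorClass (f : β → ℕ) (j : ℕ) : Set β := {e | f e = j}

/-- `f` and `g` differ by at most `n` color classes. -/
def MDifferAtMost (n : ℕ) (f g : β → ℕ) : Prop :=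
  {j : ℕ | mColorClass f j ≠ mColorClass g j}.ncard ≤ n

/-- `n`-equivalence of proper `t`-edge-colorings of a multigraph. -/
def MNEquiv (G : Multigraph α β) (t n : ℕ) (f g : β → ℕ) : Prop :=
  ∃ (k : ℕ) (F : ℕ → β → ℕ), 1 ≤ k ∧ F 0 = f ∧ F k = g ∧
    (∀ i ≤ k, G.IsProper t (F i)) ∧ ∀ i < k, MDifferAtMost n (F i) (F (i + 1))

/-- The chromatic index of a multigraph. -/
noncomputable def mChromIdx (G : Multigraph α β) : ℕ :=
  sInf {t | ∃ f, G.IsProper t f}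

/-- The edge chromatic transformation index of a multigraph. -/
noncomputable def mTransIdx (G : Multigraph α β) : ℕ :=
  sInf {n | 2 ≤ n ∧ ∀ f g, G.IsProper G.mChromIdx f → G.IsProper G.mChromIdx g →
      G.MNEquiv G.mChromIdx n f g}

/-- The degree of a vertex in a multigraph. -/
noncomputable def mDeg (G : Multigraph α β) (x : α) : ℕ := {e | x ∈ G.ends e}.ncard

/-- The underlying simple graph of a multigraph. -/
def toSimple (G : Multigraph α β) : SimpleGraph α :=
  SimpleGraph.fromEdgeSet (Set.range G.ends)

end Multigraph

/-! ### Edge sets and colorings -/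

section Recoloring

/-- `f` restricts to a proper edge coloring of the edge set `E` with colors from `C`.
Its values outside `E` are irrelevant. -/
def ProperOn (E : Finset (Sym2 V)) (C : Finset ℕ) (f : Sym2 V → ℕ) : Prop :=
  (∀ e ∈ E, f e ∈ C) ∧ ∀ e₁ ∈ E, ∀ e₂ ∈ E, ∀ x, x ∈ e₁ → x ∈ e₂ → f e₁ = f e₂ → e₁ = e₂

/-- A single transformation step: both colorings are proper, and all edges on which they differ
carry, before and after, one of at most four colors. -/
def Step (E : Finset (Sym2 V)) (C : Finset ℕ) (f g : Sym2 V → ℕ) : Prop :=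
  ProperOn E C f ∧ ProperOn E C g ∧
    ∃ S : Finset ℕ, S.card ≤ 4 ∧ ∀ e ∈ E, f e ≠ g e → f e ∈ S ∧ g e ∈ S

/-- The edges of `E` whose color under `f` lies in `N`. -/
def part (E : Finset (Sym2 V)) (f : Sym2 V → ℕ) (N : Finset ℕ) : Finset (Sym2 V) :=
  E.filter (f · ∈ N)

lemma mem_part {E : Finset (Sym2 V)} {f : Sym2 V → ℕ} {N : Finset ℕ} {e : Sym2 V} :
    e ∈ part E f N ↔ e ∈ E ∧ f e ∈ N := by simp [part]

lemma part_subset (E : Finset (Sym2 V)) (f : Sym2 V → ℕ) (N : Finset ℕ) : part E f N ⊆ E :=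
  Finset.filter_subset _ _

/-- Colorings may differ freely off `E`, so passing between them counts as a step. -/
lemma Step.of_eqOn {E : Finset (Sym2 V)} {C : Finset ℕ} {f g : Sym2 V → ℕ}
    (hf : ProperOn E C f) (hg : ProperOn E C g) (h : ∀ e ∈ E, f e = g e) : Step E C f g :=
  ⟨hf, hg, ∅, by simp, fun e he h' => (h' (h e he)).elim⟩

variable [DecidableEq V]

/-- The degree of the vertex `v` in the graph with edge set `E`. -/
def vdeg (E : Finset (Sym2 V)) (v : V) : ℕ := (E.filter (v ∈ ·)).card

/-- Membership in `𝒜(3)`, stated for edge sets: every subset of `E` of maximum degree at most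
three has a proper edge coloring with three colors. -/
def ThreeColorable (E : Finset (Sym2 V)) : Prop :=
  ∀ H ⊆ E, (∀ v, vdeg H v ≤ 3) → ∀ C : Finset ℕ, C.card = 3 → ∃ f, ProperOn H C f

lemma vdeg_mono {E F : Finset (Sym2 V)} (h : E ⊆ F) (v : V) : vdeg E v ≤ vdeg F v :=
  Finset.card_le_card (Finset.filter_subset_filter _ h)

lemma vdeg_union_le (E F : Finset (Sym2 V)) (v : V) : vdeg (E ∪ F) v ≤ vdeg E v + vdeg F v := by
  unfold vdeg
  rw [Finset.filter_union]
  exact Finset.card_union_le _ _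

lemma vdeg_sdiff_lt {E F : Finset (Sym2 V)} {v : V} {e : Sym2 V} (he : e ∈ E) (hF : e ∈ F)
    (hv : v ∈ e) : vdeg (E \ F) v < vdeg E v := by
  apply Finset.card_lt_card
  rw [Finset.ssubset_iff_of_subset (Finset.filter_subset_filter _ Finset.sdiff_subset)]
  exact ⟨e, by simp [he, hv], by simp [hF]⟩

lemma vdeg_le_one_iff {A : Finset (Sym2 V)} :
    (∀ v, vdeg A v ≤ 1) ↔ ∀ a ∈ A, ∀ b ∈ A, ∀ x, x ∈ a → x ∈ b → a = b := by
  simp only [vdeg, Finset.card_le_one, Finset.mem_filter]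
  constructor
  · intro h a ha b hb x hx hy
    exact h x a ⟨ha, hx⟩ b ⟨hb, hy⟩
  · rintro h x a ⟨ha, hx⟩ b ⟨hb, hy⟩
    exact h a ha b hb x hx hy

lemma vdeg_eq_zero_iff {A : Finset (Sym2 V)} {v : V} : vdeg A v = 0 ↔ ∀ a ∈ A, v ∉ a := by
  simp [vdeg, Finset.filter_eq_empty_iff]

/-- If the colors seen at `v` all lie in `N`, the degree of `v` is at most `|N|`. -/
lemma vdeg_le_card {E H : Finset (Sym2 V)} {C N : Finset ℕ} {f : Sym2 V → ℕ} {v : V}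
    (hf : ProperOn E C f) (hH : H ⊆ E) (hN : ∀ e ∈ H, v ∈ e → f e ∈ N) :
    vdeg H v ≤ N.card := by
  apply Finset.card_le_card_of_injOn f
  · intro e he
    simp only [Finset.coe_filter, mem_ofPred_eq] at he
    exact hN e he.1 he.2
  · intro a ha b hb hab
    simp only [Finset.coe_filter, mem_ofPred_eq] at ha hb
    exact hf.2 a (hH ha.1) b (hH hb.1) v ha.2 hb.2 hab

lemma vdeg_part_le {E : Finset (Sym2 V)} {C : Finset ℕ} {f : Sym2 V → ℕ}
    (hf : ProperOn E C f) (N : Finset ℕ) (v : V) : vdeg (part E f N) v ≤ N.card :=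
  vdeg_le_card hf (part_subset _ _ _) fun _ he _ => (mem_part.1 he).2

/-! ### Recoloring four color classes -/

/-- In a graph of maximum degree at most four with at most two vertices of degree four, some
matching covers all vertices of degree at least three. -/
lemma exists_matching {E H : Finset (Sym2 V)} (hE : ThreeColorable E) (hH : H ⊆ E)
    (h4 : ∀ v, vdeg H v ≤ 4) {D : Finset V} (hD : D.card ≤ 2) (h3 : ∀ v, v ∉ D → vdeg H v ≤ 3) :
    ∃ M ⊆ H, (∀ v, vdeg M v ≤ 1) ∧ ∀ v, 3 ≤ vdeg H v → ∃ e ∈ M, v ∈ e := by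
  classical
  set D' := D.filter (vdeg H · = 4) with hD'
  have hD'c : D'.card ≤ 2 := (Finset.card_filter_le _ _).trans hD
  have hmem : ∀ v, v ∈ D' ↔ vdeg H v = 4 := by
    intro v
    simp only [hD', Finset.mem_filter, and_iff_right_iff_imp]
    intro h
    by_contra hv
    have := h3 v hv
    omega
  -- One edge `s(v, z v)` is deleted at each vertex `v` of degree four.
  have hz : ∀ v, ∃ z, v ∈ D' → s(v, z) ∈ H := by
    intro v
    by_cases hv : v ∈ D'
    · have : 0 < vdeg H v := by rw [(hmem v).1 hv]; norm_num
      obtain ⟨e, he⟩ := Finset.card_pos.1 this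
      simp only [Finset.mem_filter] at he
      obtain ⟨z, rfl⟩ := Sym2.mem_iff_exists.1 he.2
      exact ⟨z, fun _ => he.1⟩
    · exact ⟨v, fun h => (hv h).elim⟩
  choose z hz using hz
  set R := D'.image fun v => s(v, z v) with hR
  have hRw : ∀ w, vdeg H w ≤ vdeg (H \ R) w + vdeg R w := by
    intro w
    refine le_trans (vdeg_mono (F := (H \ R) ∪ R) ?_ w) (vdeg_union_le _ _ w)
    intro e he
    by_cases h : e ∈ R <;> simp [h, he]
  -- The deleted edges at `w` are its own one, and those of the `v` with `z v = w`.
  have hRdeg : ∀ w, vdeg R w ≤ (if w ∈ D' then 1 else 0) + (D'.filter (z · = w)).card := by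
    intro w
    have hsub : R.filter (w ∈ ·) ⊆
        (if w ∈ D' then {s(w, z w)} else ∅) ∪ (D'.filter (z · = w)).image fun v => s(v, z v) := by
      intro e he
      simp only [hR, Finset.mem_filter, Finset.mem_image] at he
      obtain ⟨⟨v, hv, rfl⟩, hw⟩ := he
      rcases Sym2.mem_iff.1 hw with rfl | hw
      · simp [hv]
      · apply Finset.mem_union_right
        exact Finset.mem_image_of_mem _ (Finset.mem_filter.2 ⟨hv, hw.symm⟩)
    refine (Finset.card_le_card hsub).trans ((Finset.card_union_le _ _).trans ?_)
    refine Nat.add_le_add ?_ Finset.card_image_le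
    split_ifs <;> simp
  have hdeg3 : ∀ v, vdeg (H \ R) v ≤ 3 := by
    intro v
    by_cases hv : v ∈ D'
    · have := vdeg_sdiff_lt (F := R) (hz v hv) (Finset.mem_image_of_mem _ hv)
        (Sym2.mem_mk_left v (z v))
      have := h4 v
      omega
    · have h1 := h4 v
      have h2 := mt (hmem v).2 hv
      have h3 := vdeg_mono (E := H \ R) (F := H) Finset.sdiff_subset v
      omega
  obtain ⟨φ, hφ⟩ := hE (H \ R) (Finset.sdiff_subset.trans hH) hdeg3 (Finset.range 3) (by simp)
  let missing : V → Finset ℕ := fun w => Finset.range 3 \ ((H \ R).filter (w ∈ ·)).image φ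
  have hmiss : ∀ w, 3 ≤ vdeg H w → (missing w).card ≤ (D'.filter (z · = w)).card := by
    intro w hw
    have hinj : (((H \ R).filter (w ∈ ·)).image φ).card = vdeg (H \ R) w := by
      apply Finset.card_image_of_injOn
      intro a ha b hb hab
      simp only [Finset.coe_filter, mem_ofPred_eq] at ha hb
      exact hφ.2 a ha.1 b hb.1 w ha.2 hb.2 hab
    have hc : (missing w).card = 3 - vdeg (H \ R) w := by
      have : ((H \ R).filter (w ∈ ·)).image φ ⊆ Finset.range 3 := by
        intro c hc
        obtain ⟨e, he, rfl⟩ := Finset.mem_image.1 hc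
        exact hφ.1 e (Finset.mem_filter.1 he).1
      rw [Finset.card_sdiff_of_subset this, hinj, Finset.card_range]
    have h1 := hRw w
    have h2 := hRdeg w
    have h3 := h4 w
    have h4 := hmem w
    split_ifs at h2 with h
    · have := h4.1 h
      omega
    · omega
  -- So at most `|D'| ≤ 2` of the three colors are missing at a vertex that needs covering.
  set Bad := (D'.image z).biUnion fun w => if 3 ≤ vdeg H w then missing w else ∅ with hBad
  have hBadc : Bad.card ≤ 2 := by
    refine Finset.card_biUnion_le.trans (le_trans ?_ hD'c)
    rw [Finset.card_eq_sum_card_image z D']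
    apply Finset.sum_le_sum
    intro w _
    split_ifs with h
    · exact hmiss w h
    · simp
  obtain ⟨κ, hκ, hκB⟩ : ∃ κ ∈ Finset.range 3, κ ∉ Bad := by
    by_contra! h
    have := Finset.card_le_card (show Finset.range 3 ⊆ Bad from h)
    simp at this
    omega
  refine ⟨(H \ R).filter (φ · = κ), (Finset.filter_subset _ _).trans Finset.sdiff_subset, ?_, ?_⟩
  · rw [vdeg_le_one_iff]
    intro a ha b hb x hx hy
    simp only [Finset.mem_filter] at ha hb
    exact hφ.2 a ha.1 b hb.1 x hx hy (ha.2.trans hb.2.symm)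
  · intro v hv
    by_contra! hno
    have hmv : κ ∈ missing v := by
      simp only [missing, Finset.mem_sdiff, hκ, true_and, Finset.mem_image, not_exists]
      rintro e ⟨he, rfl⟩
      rw [Finset.mem_filter] at he
      exact hno e (Finset.mem_filter.2 ⟨he.1, rfl⟩) he.2
    have hpos : 0 < (D'.filter (z · = v)).card :=
      (Finset.card_pos.2 ⟨κ, hmv⟩).trans_le (hmiss v hv)
    obtain ⟨u, hu⟩ := Finset.card_pos.1 hpos
    rw [Finset.mem_filter] at hu
    apply hκB
    rw [hBad, Finset.mem_biUnion]
    exact ⟨v, Finset.mem_image.2 ⟨u, hu.1, hu.2⟩, by simp [hv, hmv]⟩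

/-- Recoloring the classes in `N`: if the rest of them, outside a matching `M`, is properly
colored by `φ` with the colors of `N` other than `κ`, giving `M` the color `κ` yields a coloring
one step away. -/
lemma step_recolor {E M : Finset (Sym2 V)} {C N : Finset ℕ} {f φ : Sym2 V → ℕ} {κ : ℕ}
    (hf : ProperOn E C f) (hNC : N ⊆ C) (hN : N.card = 4) (hκ : κ ∈ N)
    (hM : ∀ v, vdeg M v ≤ 1) (hφ : ProperOn (part E f N \ M) (N.erase κ) φ) :
    Step E C f (fun e => if f e ∈ N then (if e ∈ M then κ else φ e) else f e) := by
  rw [vdeg_le_one_iff] at hM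
  have hφN : ∀ e ∈ E, f e ∈ N → e ∉ M → φ e ∈ N ∧ φ e ≠ κ := by
    intro e he h1 h2
    have := hφ.1 e (Finset.mem_sdiff.2 ⟨mem_part.2 ⟨he, h1⟩, h2⟩)
    rw [Finset.mem_erase] at this
    exact ⟨this.2, this.1⟩
  have hφ2 : ∀ a ∈ E, f a ∈ N → a ∉ M → ∀ b ∈ E, f b ∈ N → b ∉ M → ∀ x, x ∈ a → x ∈ b →
      φ a = φ b → a = b := fun a ha h1 h2 b hb h3 h4 =>
    hφ.2 a (Finset.mem_sdiff.2 ⟨mem_part.2 ⟨ha, h1⟩, h2⟩) b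
      (Finset.mem_sdiff.2 ⟨mem_part.2 ⟨hb, h3⟩, h4⟩)
  refine ⟨hf, ⟨?_, ?_⟩, N, hN.le, ?_⟩
  · intro e he
    have := hf.1 e he
    have := hφN e he
    dsimp only
    split_ifs <;> grind
  · intro a ha b hb x hx hy hab
    have h1 := hφN a ha
    have h2 := hφN b hb
    have h3 := hφ2 a ha
    have h4 := hM a
    have h5 := hf.2 a ha b hb x hx hy
    dsimp only at hab
    split_ifs at hab <;> grind
  · intro e he
    have := hφN e he
    dsimp only
    split_ifs <;> grind

/-! ### States and their improvement -/

/-- A matching `A` sitting inside three color classes `K` of the proper coloring `f` of `E`, such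
that every vertex outside `D` has degree at most two in those classes once `A` is removed.
The at most two vertices of `D`, the defects, are not covered by `A`. -/
structure State (E : Finset (Sym2 V)) (C : Finset ℕ) (f : Sym2 V → ℕ) (K : Finset ℕ)
    (A : Finset (Sym2 V)) (D : Finset V) : Prop where
  proper : ProperOn E C f
  sub : K ⊆ C
  card : K.card = 3
  inside : A ⊆ part E f K
  matching : ∀ v, vdeg A v ≤ 1
  card_defect : D.card ≤ 2
  uncovered : ∀ v ∈ D, vdeg A v = 0
  /-- Vertices that do not see all three colors need not be covered by `A`. -/
  degree : ∀ v, v ∉ D → vdeg (part E f K \ A) v ≤ 2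

/-- Moving a matching inside four color classes: after recoloring these classes, the new matching
again lies in only three of them. -/
lemma exists_state {E : Finset (Sym2 V)} (hE : ThreeColorable E) {C N : Finset ℕ}
    {f : Sym2 V → ℕ} (hf : ProperOn E C f) (hNC : N ⊆ C) (hN : N.card = 4)
    {A : Finset (Sym2 V)} {D : Finset V} (hA : A ⊆ part E f N) (hAm : ∀ v, vdeg A v ≤ 1)
    (hD : D.card ≤ 2) (hDA : ∀ v ∈ D, vdeg A v = 0)
    (hdeg : ∀ v, v ∉ D → vdeg (part E f N \ A) v ≤ 3) :
    ∃ f' K, Step E C f f' ∧ State E C f' K A D := by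
  have hpE : part E f N ⊆ E := part_subset _ _ _
  have h4 : ∀ v, vdeg (part E f N) v ≤ 4 := fun v => hN ▸ vdeg_part_le hf N v
  obtain ⟨M, hMH, hM, hcov⟩ := exists_matching hE (H := part E f N \ A)
    (Finset.sdiff_subset.trans hpE)
    (fun v => (vdeg_mono Finset.sdiff_subset v).trans (h4 v)) hD hdeg
  have hd3 : ∀ v, vdeg (part E f N \ M) v ≤ 3 := by
    intro v
    by_cases h : 3 ≤ vdeg (part E f N \ A) v
    · obtain ⟨e, he, hv⟩ := hcov v h
      have := vdeg_sdiff_lt (Finset.sdiff_subset (hMH he)) he hv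
      have := h4 v
      omega
    · have h1 := vdeg_mono (E := part E f N \ M) (F := (part E f N \ A) ∪ A)
        (by intro e he; by_cases h : e ∈ A <;> simp_all) v
      have h2 := vdeg_union_le (part E f N \ A) A v
      have h3 := hAm v
      omega
  obtain ⟨κ, hκ⟩ : ∃ κ, κ ∈ N := Finset.card_pos.1 (by omega)
  have hKc : (N.erase κ).card = 3 := by rw [Finset.card_erase_of_mem hκ]; omega
  obtain ⟨φ, hφ⟩ := hE (part E f N \ M) (Finset.sdiff_subset.trans hpE) hd3 _ hKc
  have hstep := step_recolor hf hNC hN hκ hM hφ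
  refine ⟨_, N.erase κ, hstep, ?_⟩
  have hpart : part E (fun e => if f e ∈ N then (if e ∈ M then κ else φ e) else f e) (N.erase κ)
      = part E f N \ M := by
    ext e
    have h1 := hφ.1 e
    simp only [Finset.mem_sdiff, mem_part, Finset.mem_erase] at h1 ⊢
    split_ifs <;> grind
  refine ⟨hstep.2.1, (Finset.erase_subset _ _).trans hNC, hKc, ?_, hAm, hD, hDA, ?_⟩
  · rw [hpart]
    intro e he
    exact Finset.mem_sdiff.2 ⟨hA he, fun h => (Finset.mem_sdiff.1 (hMH h)).2 he⟩
  · intro v hv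
    rw [hpart]
    have hsub : (part E f N \ M) \ A = (part E f N \ A) \ M := sdiff_right_comm _ _ _
    rw [hsub]
    have h1 := hdeg v hv
    by_cases h : 3 ≤ vdeg (part E f N \ A) v
    · obtain ⟨e, he, hve⟩ := hcov v h
      have := vdeg_sdiff_lt (hMH he) he hve
      omega
    · have := vdeg_mono (E := (part E f N \ A) \ M) (F := part E f N \ A) Finset.sdiff_subset v
      omega

namespace State

variable {E : Finset (Sym2 V)} {C K : Finset ℕ} {f : Sym2 V → ℕ} {A : Finset (Sym2 V)}
  {D : Finset V}

lemma degree_insert (h : State E C f K A D) (c : ℕ) {v : V} (hv : v ∉ D) :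
    vdeg (part E f (insert c K) \ A) v ≤ 3 := by
  have h1 := vdeg_mono (E := part E f (insert c K) \ A)
    (F := (part E f K \ A) ∪ part E f {c}) (by
      intro e he
      simp only [Finset.mem_sdiff, mem_part, Finset.mem_insert, Finset.mem_union,
        Finset.mem_singleton] at he ⊢
      tauto) v
  have h2 := vdeg_union_le (part E f K \ A) (part E f {c}) v
  have h3 := h.degree v hv
  have h4 := vdeg_part_le h.proper {c} v
  simp at h4
  omega

/-- A vertex sees each of the four colors at most once, so covering it leaves degree three. -/
lemma degree_covered (h : State E C f K A D) {c : ℕ} (hc : c ∉ K) {A' : Finset (Sym2 V)}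
    (hA' : A' ⊆ part E f (insert c K)) {v : V} {e : Sym2 V} (he : e ∈ A') (hv : v ∈ e) :
    vdeg (part E f (insert c K) \ A') v ≤ 3 := by
  have h1 := vdeg_sdiff_lt (hA' he) he hv
  have h2 := vdeg_part_le h.proper (insert c K) v
  rw [Finset.card_insert_of_notMem hc, h.card] at h2
  omega

lemma inside_insert (h : State E C f K A D) (c : ℕ) : A ⊆ part E f (insert c K) := by
  intro e he
  have := mem_part.1 (h.inside he)
  exact mem_part.2 ⟨this.1, Finset.mem_insert_of_mem this.2⟩

lemma exists_color (h : State E C f K A D) (hC : 5 ≤ C.card) {c : ℕ} (hc : c ∈ C) :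
    ∃ c' ∈ C, c' ∉ K ∧ c ∈ insert c' K := by
  by_cases hcK : c ∈ K
  · obtain ⟨c', h1, h2⟩ := Finset.exists_mem_notMem_of_card_lt_card
      (show K.card < C.card by rw [h.card]; omega)
    exact ⟨c', h1, h2, Finset.mem_insert_of_mem hcK⟩
  · exact ⟨c, hc, hcK, Finset.mem_insert_self _ _⟩

/-- Without defects, `A` can be made the color class of any prescribed color. -/
lemma finish (h : State E C f K A ∅) (hE : ThreeColorable E) (hC : 5 ≤ C.card) {t : ℕ}
    (ht : t ∈ C) : ∃ f', Step E C f f' ∧ part E f' {t} = A := by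
  obtain ⟨c, hcC, hcK, htc⟩ := h.exists_color hC ht
  have hN : (insert c K).card = 4 := by rw [Finset.card_insert_of_notMem hcK, h.card]
  obtain ⟨φ, hφ⟩ := hE (part E f (insert c K) \ A)
    (Finset.sdiff_subset.trans (part_subset _ _ _))
    (fun v => h.degree_insert c (Finset.notMem_empty v)) ((insert c K).erase t)
    (by rw [Finset.card_erase_of_mem htc]; omega)
  refine ⟨_, step_recolor h.proper (Finset.insert_subset hcC h.sub) hN htc h.matching hφ, ?_⟩
  ext e
  have h1 := hφ.1 e
  have h2 : e ∈ A → _ := fun he => h.inside_insert c he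
  simp only [Finset.mem_sdiff, mem_part, Finset.mem_erase, Finset.mem_singleton] at h1 h2 ⊢
  split_ifs <;> grind

/-- The color class of `t` is a state without defects. -/
lemma of_colorClass (hf : ProperOn E C f) (hC : 5 ≤ C.card) {t : ℕ} (ht : t ∈ C) :
    ∃ K, State E C f K (part E f {t}) ∅ := by
  obtain ⟨K, htK, hKC, hK⟩ := Finset.exists_subsuperset_card_eq
    (Finset.singleton_subset_iff.2 ht) (show _ ≤ 3 by simp) (show 3 ≤ C.card by omega)
  rw [Finset.singleton_subset_iff] at htK
  refine ⟨K, hf, hKC, hK, ?_, ?_, by simp, by simp, ?_⟩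
  · intro e he
    rw [mem_part, Finset.mem_singleton] at he
    exact mem_part.2 ⟨he.1, he.2 ▸ htK⟩
  · exact fun v => by simpa using vdeg_part_le hf {t} v
  · intro v _
    have : (K.erase t).card = 2 := by rw [Finset.card_erase_of_mem htK]; omega
    rw [← this]
    apply vdeg_le_card hf (Finset.sdiff_subset.trans (part_subset _ _ _))
    intro e he _
    simp only [Finset.mem_sdiff, mem_part, Finset.mem_singleton, Finset.mem_erase] at he ⊢
    tauto

end State

/-- As long as the matching `A` is not the target `B` or has defects, one step produces a state
that is closer to `B`. The matching `B` is assumed to cover every vertex at which `f` uses all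
colors, as a color class does. -/
lemma State.improve {E : Finset (Sym2 V)} (hE : ThreeColorable E) (hdiag : ∀ e ∈ E, ¬ e.IsDiag)
    {C K : Finset ℕ} {f : Sym2 V → ℕ} {A B : Finset (Sym2 V)} {D : Finset V}
    (h : State E C f K A D) (hC : 5 ≤ C.card) (hBE : B ⊆ E) (hB : ∀ v, vdeg B v ≤ 1)
    (hBcov : ∀ v, vdeg B v = 0 → vdeg E v < C.card) (hne : ¬ (A = B ∧ D = ∅)) :
    ∃ f' K' A' D', Step E C f f' ∧ State E C f' K' A' D' ∧
      3 * (symmDiff A' B).card + D'.card < 3 * (symmDiff A B).card + D.card := by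
  -- It suffices to find the new matching and the new defects inside `K` and one more color.
  suffices hs : ∃ c ∈ C, c ∉ K ∧ ∃ A' ⊆ part E f (insert c K), ∃ D' : Finset V,
      (∀ v, vdeg A' v ≤ 1) ∧ D'.card ≤ 2 ∧ (∀ v ∈ D', vdeg A' v = 0) ∧
      (∀ v, v ∉ D' → vdeg (part E f (insert c K) \ A') v ≤ 3) ∧
      3 * (symmDiff A' B).card + D'.card < 3 * (symmDiff A B).card + D.card by
    obtain ⟨c, hcC, hcK, A', hA', D', h1, h2, h3, h4, h5⟩ := hs
    obtain ⟨f', K', h6, h7⟩ := exists_state hE h.proper (Finset.insert_subset hcC h.sub)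
      (by rw [Finset.card_insert_of_notMem hcK, h.card]) hA' h1 h2 h3 h4
    exact ⟨f', K', A', D', h6, h7, h5⟩
  have hAm := vdeg_le_one_iff.1 h.matching
  have hBm := vdeg_le_one_iff.1 hB
  have hAE : A ⊆ E := h.inside.trans (part_subset _ _ _)
  have hBcol : ∀ e ∈ B, ∃ c ∈ C, c ∉ K ∧ f e ∈ insert c K := fun e he =>
    h.exists_color hC (h.proper.1 e (hBE he))
  rcases D.eq_empty_or_nonempty with rfl | ⟨y, hy⟩
  · by_cases hAB : A ⊆ B
    · -- Add an edge of `B`.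
      have : ∃ e ∈ B, e ∉ A := by
        by_contra! h'
        exact hne ⟨hAB.antisymm h', rfl⟩
      obtain ⟨e, heB, heA⟩ := this
      obtain ⟨c, hcC, hcK, hec⟩ := hBcol e heB
      have hsub : insert e A ⊆ B := Finset.insert_subset heB hAB
      refine ⟨c, hcC, hcK, insert e A,
        Finset.insert_subset (mem_part.2 ⟨hBE heB, hec⟩) (h.inside_insert c), ∅,
        fun v => (vdeg_mono hsub v).trans (hB v), by simp, by simp, ?_, ?_⟩
      · intro v hv
        exact (vdeg_mono (Finset.sdiff_subset_sdiff subset_rfl (Finset.subset_insert _ _)) v).trans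
          (h.degree_insert c hv)
      · have : (symmDiff (insert e A) B).card < (symmDiff A B).card := by
          apply Finset.card_lt_card
          rw [Finset.ssubset_iff_of_subset]
          · exact ⟨e, by simp [Finset.mem_symmDiff, heA, heB], by simp [Finset.mem_symmDiff, heB]⟩
          · intro a
            simp only [Finset.mem_symmDiff, Finset.mem_insert]
            grind
        omega
    · -- Remove an edge of `A` that is not in `B`; its ends become defects.
      obtain ⟨e, heA, heB⟩ := Finset.not_subset.1 hAB
      obtain ⟨c, hcC, hcK⟩ := Finset.exists_mem_notMem_of_card_lt_card
        (show K.card < C.card by rw [h.card]; omega)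
      induction e using Sym2.ind with | _ x y
      refine ⟨c, hcC, hcK, A.erase s(x, y), (Finset.erase_subset _ _).trans (h.inside_insert c),
        {x, y}, fun v => (vdeg_mono (Finset.erase_subset _ _) v).trans (h.matching v),
        Finset.card_le_two, ?_, ?_, ?_⟩
      · intro v hv
        rw [vdeg_eq_zero_iff]
        intro a ha hva
        rw [Finset.mem_erase] at ha
        exact ha.1 (hAm a ha.2 _ heA v hva (by simpa using hv))
      · intro v hv
        refine le_trans (le_of_eq ?_) (h.degree_insert c (Finset.notMem_empty v))
        unfold vdeg
        congr 1
        ext a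
        simp only [Finset.mem_filter, Finset.mem_sdiff, Finset.mem_erase]
        have : v ∈ a → a ≠ s(x, y) := by
          rintro hva rfl
          exact hv (by simpa using hva)
        tauto
      · have h1 : (symmDiff (A.erase s(x, y)) B).card < (symmDiff A B).card := by
          apply Finset.card_lt_card
          rw [Finset.ssubset_iff_of_subset]
          · exact ⟨s(x, y), by simp [Finset.mem_symmDiff, heA, heB],
              by simp [Finset.mem_symmDiff, heB]⟩
          · intro a
            simp only [Finset.mem_symmDiff, Finset.mem_erase]
            grind
        have h2 : ({x, y} : Finset V).card ≤ 2 := Finset.card_le_two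
        simp only [Finset.card_empty]
        omega
  · have hyA := vdeg_eq_zero_iff.1 (h.uncovered y hy)
    by_cases hyB : vdeg B y = 0
    · -- Some color is missing at `y`, and including it resolves the defect.
      obtain ⟨m, hmC, hm⟩ : ∃ m ∈ C, m ∉ (E.filter (y ∈ ·)).image f :=
        Finset.exists_mem_notMem_of_card_lt_card (Finset.card_image_le.trans_lt (hBcov y hyB))
      obtain ⟨c, hcC, hcK, hmc⟩ := h.exists_color hC hmC
      refine ⟨c, hcC, hcK, A, h.inside_insert c, D.erase y, h.matching,
        (Finset.card_erase_le).trans h.card_defect,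
        fun v hv => h.uncovered v (Finset.mem_of_mem_erase hv), ?_, ?_⟩
      · intro v hv
        by_cases hvy : v = y
        · subst hvy
          have h3 : ((insert c K).erase m).card = 3 := by
            rw [Finset.card_erase_of_mem hmc, Finset.card_insert_of_notMem hcK, h.card]
          rw [← h3]
          apply vdeg_le_card h.proper (Finset.sdiff_subset.trans (part_subset _ _ _))
          intro e he hve
          have he' := mem_part.1 (Finset.mem_sdiff.1 he).1
          refine Finset.mem_erase.2 ⟨?_, he'.2⟩
          rintro rfl
          exact hm (Finset.mem_image_of_mem _ (Finset.mem_filter.2 ⟨he'.1, hve⟩))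
        · exact h.degree_insert c fun hvD => hv (Finset.mem_erase.2 ⟨hvy, hvD⟩)
      · have := Finset.card_erase_lt_of_mem hy
        omega
    · rw [vdeg_eq_zero_iff] at hyB
      push Not at hyB
      obtain ⟨e, heB, hye⟩ := hyB
      obtain ⟨z, rfl⟩ := Sym2.mem_iff_exists.1 hye
      obtain ⟨c, hcC, hcK, hec⟩ := hBcol _ heB
      have heA : s(y, z) ∉ A := fun h' => hyA _ h' hye
      have hyz : y ≠ z := fun h' => hdiag _ (hBE heB) (by simpa using h')
      by_cases hzA : vdeg A z = 0
      · -- The edge of `B` at `y` can simply be added.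
        have hA' : insert s(y, z) A ⊆ part E f (insert c K) :=
          Finset.insert_subset (mem_part.2 ⟨hBE heB, hec⟩) (h.inside_insert c)
        have hzA' := vdeg_eq_zero_iff.1 hzA
        refine ⟨c, hcC, hcK, insert s(y, z) A, hA', (D.erase y).erase z, ?_,
          (Finset.card_erase_le.trans Finset.card_erase_le).trans h.card_defect, ?_, ?_, ?_⟩
        · rw [vdeg_le_one_iff]
          intro a ha b hb x hxa hxb
          have h1 : ∀ a ∈ A, x ∈ a → x ∉ s(y, z) := by
            intro a ha hxa hx
            rcases Sym2.mem_iff.1 hx with h' | h'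
            · exact hyA a ha (h' ▸ hxa)
            · exact hzA' a ha (h' ▸ hxa)
          rcases Finset.mem_insert.1 ha with rfl | ha <;>
            rcases Finset.mem_insert.1 hb with rfl | hb
          · rfl
          · exact (h1 b hb hxb hxa).elim
          · exact (h1 a ha hxa hxb).elim
          · exact hAm a ha b hb x hxa hxb
        · intro v hv
          simp only [Finset.mem_erase] at hv
          rw [vdeg_eq_zero_iff]
          intro a ha hva
          rcases Finset.mem_insert.1 ha with rfl | ha
          · rcases Sym2.mem_iff.1 hva with h' | h'
            · exact hv.2.1 h'
            · exact hv.1 h'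
          · exact vdeg_eq_zero_iff.1 (h.uncovered v hv.2.2) a ha hva
        · intro v hv
          by_cases hve : v ∈ s(y, z)
          · exact h.degree_covered hcK hA' (Finset.mem_insert_self _ _) hve
          · rw [Sym2.mem_iff, not_or] at hve
            refine (vdeg_mono (Finset.sdiff_subset_sdiff subset_rfl
              (Finset.subset_insert _ _)) v).trans (h.degree_insert c fun hvD => hv ?_)
            simp [hve, hvD]
        · have h1 : (symmDiff (insert s(y, z) A) B).card < (symmDiff A B).card := by
            apply Finset.card_lt_card
            rw [Finset.ssubset_iff_of_subset]
            · exact ⟨s(y, z), by simp [Finset.mem_symmDiff, heA, heB],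
                by simp [Finset.mem_symmDiff, heB]⟩
            · intro a
              simp only [Finset.mem_symmDiff, Finset.mem_insert]
              grind
          have h2 : ((D.erase y).erase z).card ≤ D.card :=
            Finset.card_erase_le.trans Finset.card_erase_le
          omega
      · -- The edge of `B` at `y` replaces an edge `s(z, w)` of `A`; the defect moves to `w`.
        rw [vdeg_eq_zero_iff] at hzA
        push Not at hzA
        obtain ⟨a₀, haA, hza⟩ := hzA
        obtain ⟨w, rfl⟩ := Sym2.mem_iff_exists.1 hza
        have hzw : z ≠ w := fun h' => hdiag _ (hAE haA) (by simpa using h')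
        have hyw : y ≠ w := by
          rintro rfl
          exact hyA _ haA (Sym2.mem_mk_right _ _)
        have haB : s(z, w) ∉ B := by
          intro h'
          have := hBm _ h' _ heB z (by simp) (by simp)
          exact heA (this ▸ haA)
        have hzD : z ∉ D := fun h' => vdeg_eq_zero_iff.1 (h.uncovered z h') _ haA hza
        have hA' : insert s(y, z) (A.erase s(z, w)) ⊆ part E f (insert c K) :=
          Finset.insert_subset (mem_part.2 ⟨hBE heB, hec⟩)
            ((Finset.erase_subset _ _).trans (h.inside_insert c))
        refine ⟨c, hcC, hcK, insert s(y, z) (A.erase s(z, w)), hA', insert w (D.erase y), ?_,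
          ?_, ?_, ?_, ?_⟩
        · rw [vdeg_le_one_iff]
          intro a ha b hb x hxa hxb
          have h1 : ∀ a ∈ A.erase s(z, w), x ∈ a → x ∉ s(y, z) := by
            intro a ha hxa hx
            rw [Finset.mem_erase] at ha
            rcases Sym2.mem_iff.1 hx with h' | h'
            · exact hyA a ha.2 (h' ▸ hxa)
            · exact ha.1 (hAm a ha.2 _ haA z (h' ▸ hxa) hza)
          rcases Finset.mem_insert.1 ha with rfl | ha <;>
            rcases Finset.mem_insert.1 hb with rfl | hb
          · rfl
          · exact (h1 b hb hxb hxa).elim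
          · exact (h1 a ha hxa hxb).elim
          · exact hAm a (Finset.mem_of_mem_erase ha) b (Finset.mem_of_mem_erase hb) x hxa hxb
        · have h1 := Finset.card_insert_le w (D.erase y)
          have h2 := Finset.card_erase_lt_of_mem hy
          have h3 := h.card_defect
          omega
        · intro v hv
          rw [vdeg_eq_zero_iff]
          intro a ha hva
          rcases Finset.mem_insert.1 hv with rfl | hv <;>
            rcases Finset.mem_insert.1 ha with rfl | ha
          · rcases Sym2.mem_iff.1 hva with h' | h'
            · exact hyw h'.symm
            · exact hzw h'.symm
          · rw [Finset.mem_erase] at ha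
            exact ha.1 (hAm a ha.2 _ haA v hva (by simp))
          · rw [Finset.mem_erase] at hv
            rcases Sym2.mem_iff.1 hva with h' | h'
            · exact hv.1 h'
            · exact hzD (h' ▸ hv.2)
          · exact vdeg_eq_zero_iff.1 (h.uncovered v (Finset.mem_of_mem_erase hv)) a
              (Finset.mem_of_mem_erase ha) hva
        · intro v hv
          by_cases hve : v ∈ s(y, z)
          · exact h.degree_covered hcK hA' (Finset.mem_insert_self _ _) hve
          · have hvw : v ≠ w := fun h' => hv (by simp [h'])
            have hve' := hve
            rw [Sym2.mem_iff, not_or] at hve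
            have hvD : v ∉ D := fun h' => hv (by simp [h', hve])
            refine le_trans (le_of_eq ?_) (h.degree_insert c hvD)
            unfold vdeg
            congr 1
            ext a
            simp only [Finset.mem_filter, Finset.mem_sdiff, Finset.mem_insert, Finset.mem_erase]
            have h1 : v ∈ a → a ≠ s(y, z) := by
              rintro hva rfl
              exact hve' hva
            have h2 : v ∈ a → a ≠ s(z, w) := by
              rintro hva rfl
              rcases Sym2.mem_iff.1 hva with h' | h'
              · exact hve.2 h'
              · exact hvw h'
            tauto
        · have h1 : (symmDiff (insert s(y, z) (A.erase s(z, w))) B).card < (symmDiff A B).card := by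
            apply Finset.card_lt_card
            rw [Finset.ssubset_iff_of_subset]
            · exact ⟨s(y, z), by simp [Finset.mem_symmDiff, heA, heB],
                by simp [Finset.mem_symmDiff, heB]⟩
            · intro a
              simp only [Finset.mem_symmDiff, Finset.mem_insert, Finset.mem_erase]
              grind
          have h2 := Finset.card_insert_le w (D.erase y)
          have h3 := Finset.card_erase_lt_of_mem hy
          omega

/-- From any state, the color class of `t` can be turned into `B`, by induction on the potential
`3 |A △ B| + |D|`. -/
lemma State.reach {E : Finset (Sym2 V)} (hE : ThreeColorable E) (hdiag : ∀ e ∈ E, ¬ e.IsDiag)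
    {C : Finset ℕ} {B : Finset (Sym2 V)} (hC : 5 ≤ C.card) (hBE : B ⊆ E) (hB : ∀ v, vdeg B v ≤ 1)
    (hBcov : ∀ v, vdeg B v = 0 → vdeg E v < C.card) {t : ℕ} (ht : t ∈ C) (n : ℕ) :
    ∀ (f : Sym2 V → ℕ) (K : Finset ℕ) (A : Finset (Sym2 V)) (D : Finset V), State E C f K A D →
      3 * (symmDiff A B).card + D.card = n →
      ∃ f', Relation.ReflTransGen (Step E C) f f' ∧ ProperOn E C f' ∧ part E f' {t} = B := by
  induction n using Nat.strong_induction_on with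
  | _ n ih =>
    intro f K A D h hn
    by_cases hne : A = B ∧ D = ∅
    · obtain ⟨rfl, rfl⟩ := hne
      obtain ⟨f', h1, h2⟩ := h.finish hE hC ht
      exact ⟨f', .single h1, h1.2.1, h2⟩
    · obtain ⟨f', K', A', D', h1, h2, h3⟩ := h.improve hE hdiag hC hBE hB hBcov hne
      obtain ⟨f'', h4, h5⟩ := ih _ (hn ▸ h3) f' K' A' D' h2 rfl
      exact ⟨f'', .head h1 h4, h5⟩

/-! ### Connectivity of the colorings -/

/-- Giving the deleted matching `B` the color `t`, which the rest of `E` does not use, turns proper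
colorings of `E \ B` into proper colorings of `E`. -/
lemma ProperOn.extend {E B : Finset (Sym2 V)} {C : Finset ℕ} {f : Sym2 V → ℕ} {t : ℕ}
    (ht : t ∈ C) (hB : ∀ v, vdeg B v ≤ 1) (hf : ProperOn (E \ B) (C.erase t) f) :
    ProperOn E C (fun e => if e ∈ B then t else f e) := by
  rw [vdeg_le_one_iff] at hB
  obtain ⟨h1, h2⟩ := hf
  simp only [Finset.mem_sdiff, Finset.mem_erase] at h1 h2
  constructor
  · intro e he
    have := h1 e
    dsimp only
    split_ifs <;> grind
  · intro a ha b hb x hx hy hab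
    have h3 := h1 a
    have h4 := h1 b
    have h5 := h2 a
    have h6 := hB a
    dsimp only at hab
    split_ifs at hab <;> grind

/-- Any two proper colorings of a graph in `𝒜(3)` with the same set of colors are
4-equivalent. -/
theorem reflTransGen_step (n : ℕ) : ∀ (E : Finset (Sym2 V)) (C : Finset ℕ) (f g : Sym2 V → ℕ),
    C.card = n → ThreeColorable E → (∀ e ∈ E, ¬ e.IsDiag) → ProperOn E C f → ProperOn E C g →
    Relation.ReflTransGen (Step E C) f g := by
  induction n with
  | zero =>
    intro E C f g hC _ _ hf hg
    exact .single ⟨hf, hg, C, by omega, fun e he _ => ⟨hf.1 e he, hg.1 e he⟩⟩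
  | succ n ih =>
    intro E C f g hC hE hdiag hf hg
    by_cases h4 : C.card ≤ 4
    · exact .single ⟨hf, hg, C, h4, fun e he _ => ⟨hf.1 e he, hg.1 e he⟩⟩
    have hC5 : 5 ≤ C.card := by omega
    obtain ⟨t, ht⟩ : ∃ t, t ∈ C := Finset.card_pos.1 (by omega)
    set B := part E g {t} with hBdef
    have hBm : ∀ v, vdeg B v ≤ 1 := fun v => by simpa using vdeg_part_le hg {t} v
    have hBE : B ⊆ E := part_subset _ _ _
    have hBcov : ∀ v, vdeg B v = 0 → vdeg E v < C.card := by
      intro v hv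
      rw [vdeg_eq_zero_iff] at hv
      refine lt_of_le_of_lt (vdeg_le_card hg subset_rfl (N := C.erase t) ?_)
        (Finset.card_erase_lt_of_mem ht)
      intro e he hve
      refine Finset.mem_erase.2 ⟨?_, hg.1 e he⟩
      intro h'
      exact hv e (mem_part.2 ⟨he, by simp [h']⟩) hve
    obtain ⟨K, hK⟩ := State.of_colorClass hf hC5 ht
    obtain ⟨f', hff', hf', hf'B⟩ := State.reach hE hdiag hC5 hBE hBm hBcov ht _ f K _ _ hK rfl
    have hrestr : ∀ h, ProperOn E C h → part E h {t} = B → ProperOn (E \ B) (C.erase t) h := by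
      intro h hh hB
      refine ⟨?_, fun a ha b hb => hh.2 a (Finset.sdiff_subset ha) b (Finset.sdiff_subset hb)⟩
      intro e he
      rw [Finset.mem_sdiff, ← hB, mem_part, Finset.mem_singleton] at he
      exact Finset.mem_erase.2 ⟨fun h' => he.2 ⟨he.1, h'⟩, hh.1 e he.1⟩
    have hIH := ih (E \ B) (C.erase t) f' g (by rw [Finset.card_erase_of_mem ht]; omega)
      (fun H hH => hE H (hH.trans Finset.sdiff_subset))
      (fun e he => hdiag e (Finset.sdiff_subset he)) (hrestr f' hf' hf'B) (hrestr g hg rfl)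
    have hlift : Relation.ReflTransGen (Step E C) (fun e => if e ∈ B then t else f' e)
        (fun e => if e ∈ B then t else g e) := by
      refine Relation.ReflTransGen.lift (r := Step (E \ B) (C.erase t))
        (fun (h : Sym2 V → ℕ) e => if e ∈ B then t else h e) ?_ _ _ hIH
      rintro h h' ⟨h1, h2, S, hS, hS'⟩
      refine ⟨h1.extend ht hBm, h2.extend ht hBm, S, hS, ?_⟩
      intro e he
      have := hS' e
      rw [Finset.mem_sdiff] at this
      dsimp only
      split_ifs with heB
      · exact fun h => (h rfl).elim
      · exact this ⟨he, heB⟩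
    have hagree : ∀ h, part E h {t} = B → ∀ e ∈ E, h e = if e ∈ B then t else h e := by
      intro h hB e he
      split_ifs with heB
      · rw [← hB, mem_part, Finset.mem_singleton] at heB
        exact heB.2
      · rfl
    have hf'' := (hrestr f' hf' hf'B).extend ht hBm
    have hg'' := (hrestr g hg rfl).extend ht hBm
    exact (hff'.tail (Step.of_eqOn hf' hf'' (hagree f' hf'B))).trans
      (hlift.tail (Step.of_eqOn hg'' hg fun e he => (hagree g rfl e he).symm))

end Recoloring

/-! ### Line perfect graphs -/

section LineGraph

/-- Four distinct pairwise intersecting edges have a common vertex. -/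
lemma exists_common_vertex {e₁ e₂ e₃ e₄ : Sym2 V} (h12 : e₁ ≠ e₂) (h13 : e₁ ≠ e₃) (h14 : e₁ ≠ e₄)
    (h23 : e₂ ≠ e₃) (h24 : e₂ ≠ e₄) (h34 : e₃ ≠ e₄) (i12 : ∃ x, x ∈ e₁ ∧ x ∈ e₂)
    (i13 : ∃ x, x ∈ e₁ ∧ x ∈ e₃) (i14 : ∃ x, x ∈ e₁ ∧ x ∈ e₄) (i23 : ∃ x, x ∈ e₂ ∧ x ∈ e₃)
    (i24 : ∃ x, x ∈ e₂ ∧ x ∈ e₄) (i34 : ∃ x, x ∈ e₃ ∧ x ∈ e₄) :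
    ∃ x, x ∈ e₁ ∧ x ∈ e₂ ∧ x ∈ e₃ ∧ x ∈ e₄ := by
  obtain ⟨a, h1, h2⟩ := i12
  obtain ⟨b, rfl⟩ := Sym2.mem_iff_exists.1 h1
  obtain ⟨c, rfl⟩ := Sym2.mem_iff_exists.1 h2
  induction e₃ using Sym2.ind with | _ p q
  induction e₄ using Sym2.ind with | _ r s
  simp only [Sym2.mem_iff, exists_eq_or_imp, exists_eq_left, ne_eq, Sym2.eq_iff] at *
  grind

/-- Cliques of the line graph are stars or triangles, so a perfect line graph makes `G` a member
of `𝒜(3)`. -/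
lemma threeColorable_of_isPerfect [DecidableEq V] (G : SimpleGraph V) (hLP : IsPerfect (lineGr G))
    {E : Finset (Sym2 V)} (hE : ∀ e, e ∈ E ↔ e ∈ G.edgeSet) : ThreeColorable E := by
  classical
  intro H hH hdeg C hC
  set s : Set G.edgeSet := {e | (e : Sym2 V) ∈ H} with hs
  have hadj : ∀ a b : s, ((lineGr G).induce s).Adj a b ↔
      (a.1 : Sym2 V) ≠ b.1 ∧ ∃ x, x ∈ (a.1 : Sym2 V) ∧ x ∈ (b.1 : Sym2 V) := by
    intro a b
    simp only [lineGr, SimpleGraph.comap_adj, SimpleGraph.fromRel_adj, Function.Embedding.coe_subtype,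
      ne_eq, Subtype.ext_iff]
    constructor
    · rintro ⟨h1, ⟨x, h2, h3⟩ | ⟨x, h2, h3⟩⟩
      exacts [⟨h1, x, h2, h3⟩, ⟨h1, x, h3, h2⟩]
    · rintro ⟨h1, h2⟩
      exact ⟨h1, .inl h2⟩
  have hω : cliqueNumE ((lineGr G).induce s) ≤ 3 := by
    apply sSup_le
    rintro _ ⟨m, Q, rfl, hQ⟩
    by_contra! hm
    have hm4 : 4 ≤ Q.card := by
      rw [hQ.card_eq]
      exact_mod_cast Order.add_one_le_of_lt hm
    obtain ⟨Q', hQ', hc⟩ := Finset.exists_subset_card_eq hm4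
    obtain ⟨a, b, c, d, hab, hac, had, hbc, hbd, hcd, rfl⟩ := Finset.card_eq_four.1 hc
    have hcl : ∀ p ∈ ({a, b, c, d} : Finset s), ∀ q ∈ ({a, b, c, d} : Finset s), p ≠ q →
        (p.1 : Sym2 V) ≠ q.1 ∧ ∃ x, x ∈ (p.1 : Sym2 V) ∧ x ∈ (q.1 : Sym2 V) :=
      fun p hp q hq hpq => (hadj p q).1 (hQ.isClique (hQ' hp) (hQ' hq) hpq)
    have k1 := hcl a (by simp) b (by simp) hab
    have k2 := hcl a (by simp) c (by simp) hac
    have k3 := hcl a (by simp) d (by simp) had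
    have k4 := hcl b (by simp) c (by simp) hbc
    have k5 := hcl b (by simp) d (by simp) hbd
    have k6 := hcl c (by simp) d (by simp) hcd
    obtain ⟨x, x1, x2, x3, x4⟩ := exists_common_vertex k1.1 k2.1 k3.1 k4.1 k5.1 k6.1
      k1.2 k2.2 k3.2 k4.2 k5.2 k6.2
    have hsub : ({a.1.1, b.1.1, c.1.1, d.1.1} : Finset (Sym2 V)) ⊆ H.filter (x ∈ ·) := by
      intro e he
      simp only [Finset.mem_insert, Finset.mem_singleton] at he
      rcases he with rfl | rfl | rfl | rfl
      exacts [Finset.mem_filter.2 ⟨a.2, x1⟩, Finset.mem_filter.2 ⟨b.2, x2⟩,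
        Finset.mem_filter.2 ⟨c.2, x3⟩, Finset.mem_filter.2 ⟨d.2, x4⟩]
    have h4 : ({a.1.1, b.1.1, c.1.1, d.1.1} : Finset (Sym2 V)).card = 4 :=
      Finset.card_eq_four.2 ⟨_, _, _, _, k1.1, k2.1, k3.1, k4.1, k5.1, k6.1, rfl⟩
    have := Finset.card_le_card hsub
    have := hdeg x
    unfold vdeg at this
    omega
  have hcol : ((lineGr G).induce s).Colorable 3 := by
    rw [← SimpleGraph.chromaticNumber_le_iff_colorable, hLP s]
    exact hω
  obtain ⟨col⟩ := hcol
  let em := C.orderEmbOfFin hC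
  have hHs : ∀ e (he : e ∈ H), (⟨e, (hE e).1 (hH he)⟩ : G.edgeSet) ∈ s := fun e he => he
  refine ⟨fun e => if he : e ∈ H then em (col ⟨_, hHs e he⟩) else 0, ?_, ?_⟩
  · intro e he
    simp only [he, dite_true]
    exact C.orderEmbOfFin_mem hC _
  · intro a ha b hb x hx hy hab
    simp only [ha, hb, dite_true, EmbeddingLike.apply_eq_iff_eq] at hab
    by_contra hne
    exact col.valid ((hadj ⟨_, hHs a ha⟩ ⟨_, hHs b hb⟩).2 ⟨hne, x, hx, hy⟩) hab

lemma isProperEdgeColoring_iff [DecidableEq V] {G : SimpleGraph V} {E : Finset (Sym2 V)}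
    (hE : ∀ e, e ∈ E ↔ e ∈ G.edgeSet) {t : ℕ} {f : Sym2 V → ℕ} :
    IsProperEdgeColoring G t f ↔ ProperOn E (Finset.Icc 1 t) f := by
  unfold IsProperEdgeColoring ProperOn
  simp only [hE]
  refine and_congr_right fun _ => ⟨?_, ?_⟩
  · intro h a ha b hb x hx hy hab
    by_contra hne
    exact h a ha b hb hne ⟨x, hx, hy⟩ hab
  · rintro h a ha b hb hne ⟨x, hx, hy⟩ hab
    exact hne (h a ha b hb x hx hy hab)

lemma differAtMost_of_step [DecidableEq V] {G : SimpleGraph V} {E : Finset (Sym2 V)}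
    (hE : ∀ e, e ∈ E ↔ e ∈ G.edgeSet) {C : Finset ℕ} {f g : Sym2 V → ℕ} (h : Step E C f g) :
    DifferAtMost G 4 f g := by
  obtain ⟨-, -, S, hS, hfg⟩ := h
  have hsub : {j : ℕ | colorClass G f j ≠ colorClass G g j} ⊆ (S : Set ℕ) := by
    intro j hj
    by_contra hjS
    apply hj
    ext e
    simp only [colorClass, mem_ofPred_eq, and_congr_right_iff, ← hE]
    intro he
    have := hfg e he
    by_cases heq : f e = g e
    · rw [heq]
    · obtain ⟨h1, h2⟩ := this heq
      constructor <;> rintro rfl <;> exact (hjS ‹_›).elim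
  unfold DifferAtMost
  exact (Set.ncard_le_ncard hsub S.finite_toSet).trans (by rwa [Set.ncard_coe_finset])

lemma nEquiv_of_reflTransGen [DecidableEq V] {G : SimpleGraph V} {E : Finset (Sym2 V)}
    (hE : ∀ e, e ∈ E ↔ e ∈ G.edgeSet) {t : ℕ} {f g : Sym2 V → ℕ}
    (hf : ProperOn E (Finset.Icc 1 t) f)
    (h : Relation.ReflTransGen (Step E (Finset.Icc 1 t)) f g) : NEquiv G t 4 f g := by
  induction h with
  | refl =>
    refine ⟨1, fun _ => f, le_rfl, rfl, rfl, fun _ _ => (isProperEdgeColoring_iff hE).2 hf, ?_⟩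
    intro _ _
    exact differAtMost_of_step hE (Step.of_eqOn hf hf fun _ _ => rfl)
  | @tail g h _ hstep ih =>
    obtain ⟨k, F, hk, h0, hFk, hp, hd⟩ := ih
    refine ⟨k + 1, fun i => if i ≤ k then F i else h, by omega, by simp [h0], by simp, ?_, ?_⟩
    · intro i _
      dsimp only
      split_ifs with hi
      · exact hp i hi
      · exact (isProperEdgeColoring_iff hE).2 hstep.2.1
    · intro i hi
      rcases Nat.lt_succ_iff_lt_or_eq.1 hi with hi | rfl
      · simpa [hi.le, Nat.succ_le_of_lt hi] using hd i hi
      · simpa [hFk] using differAtMost_of_step hE hstep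

end LineGraph

/-- If `G` is a line perfect graph (its line graph is perfect), then
`χ'_trans(G) ≤ 4`. -/
theorem edge_chromatic_transformation_index_le_four_of_linePerfect
    {V : Type*} [Fintype V] (G : SimpleGraph V) (hLP : IsPerfect (lineGr G)) :
    transIdx G ≤ 4 ∧
    ∀ f g, IsProperEdgeColoring G (chromIdx G) f → IsProperEdgeColoring G (chromIdx G) g →
      NEquiv G (chromIdx G) 4 f g := by
  classical
  have hE : ∀ e, e ∈ G.edgeSet.toFinite.toFinset ↔ e ∈ G.edgeSet := by simp
  have main : ∀ f g, IsProperEdgeColoring G (chromIdx G) f →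
      IsProperEdgeColoring G (chromIdx G) g → NEquiv G (chromIdx G) 4 f g := by
    intro f g hf hg
    rw [isProperEdgeColoring_iff hE] at hf hg
    exact nEquiv_of_reflTransGen hE hf (reflTransGen_step _ _ _ f g rfl
      (threeColorable_of_isPerfect G hLP hE)
      (fun e he => G.not_isDiag_of_mem_edgeSet ((hE e).1 he)) hf hg)
  exact ⟨Nat.sInf_le ⟨by norm_num, main⟩, main⟩

end EdgeTrans
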